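/- Let (X, ℬ, μ, T) be a conservative, measure-preserving transformation of a σ-finite measure space, and let f, g ∈ L¹(X, μ) with f > 0 and g > 0 μ-almost everywhere. Then liminf_{n→∞} S_n f / S_n g = limsup_{n→∞} S_n f / S_n g μ-almost everywhere; that is, the limit lim_{n→∞} S_n f / S_n g exists μ-almost everywhere. -/

import Mathlib

/-!
This is Hopf's ratio ergodic theorem. The maximal ergodic lemma (`integral_nonneg_of_maximal`)
says that `∫ h ≥ 0` as soon as almost every point has a positive Birkhoff sum of `h`. By
conservativity `S_n g → ∞` almost everywhere (`ae_tendsto_birkhoff_atTop`), so dropping the first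
term of an orbit does not affect the upper limit of `S_n h / S_n g`: the set
`ratioAbove T h g b` where this upper limit exceeds `b` is invariant modulo null sets
(`preimage_ratioAbove`).

Given `a < b`, let `A` be the set where the lower limit of `S_n f / S_n g` is below `a` and the
upper limit is above `b`. Restricting `μ` to the invariant set `A` and applying the maximal lemma to
`f - b g` and to `a g - f` gives `b ∫_A g ≤ ∫_A f ≤ a ∫_A g`, which forces `μ A = 0` because `g > 0`
(`measure_oscillation_eq_zero`). Countably many pairs of rationals `a < b` cover the set where the
lower and upper limits differ.
-/

open MeasureTheory Filter Topology

/-- `T` is conservative w.r.t. `μ`: every set of positive measure returns to itself. -/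
def IsConservative {X : Type*} [MeasurableSpace X] (T : X → X) (μ : Measure X) : Prop :=
  ∀ A : Set X, MeasurableSet A → 0 < μ A → ∃ n ≥ 1, 0 < μ (A ∩ (T^[n]) ⁻¹' A)

/-- Birkhoff sum `S_n f = ∑_{k<n} f ∘ T^k`. -/
noncomputable def birkhoff {X : Type*} (T : X → X) (f : X → ℝ) (n : ℕ) (x : X) : ℝ :=
  ∑ k ∈ Finset.range n, f (T^[k] x)

/-! ### Algebra and measurability of Birkhoff sums -/

theorem birkhoff_succ' {X : Type*} (T : X → X) (f : X → ℝ) (n : ℕ) (x : X) :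
    birkhoff T f (n + 1) x = f x + birkhoff T f n (T x) := by
  simp only [birkhoff, Finset.sum_range_succ', Function.iterate_succ_apply,
    Function.iterate_zero, id]
  ring

theorem birkhoff_neg {X : Type*} (T : X → X) (f : X → ℝ) (n : ℕ) (x : X) :
    birkhoff T (fun y => -f y) n x = -birkhoff T f n x := by
  simp [birkhoff]

theorem birkhoff_sub_mul {X : Type*} (T : X → X) (f g : X → ℝ) (b : ℝ) (n : ℕ) (x : X) :
    birkhoff T (fun y => f y - b * g y) n x = birkhoff T f n x - b * birkhoff T g n x := by
  simp [birkhoff, Finset.sum_sub_distrib, Finset.mul_sum]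

theorem birkhoff_nonneg {X : Type*} (T : X → X) {g : X → ℝ} (hg : ∀ x, 0 < g x) (n : ℕ) (x : X) :
    0 ≤ birkhoff T g n x :=
  Finset.sum_nonneg fun _ _ => (hg _).le

theorem measurable_birkhoff {X : Type*} [MeasurableSpace X] {T : X → X} (hT : Measurable T)
    {f : X → ℝ} (hf : Measurable f) (n : ℕ) : Measurable (birkhoff T f n) := by
  unfold birkhoff
  exact Finset.measurable_sum _ fun k _ => hf.comp (hT.iterate k)

/-! ### The maximal ergodic lemma -/

/-- The running maximum `max_{0 ≤ n ≤ N} S_n h`, with `S_0 h = 0` included, encoded through the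
recursion `M_{N+1} = max 0 (h + M_N ∘ T)`. -/
noncomputable def maxBirkhoff {X : Type*} (T : X → X) (h : X → ℝ) : ℕ → X → ℝ
  | 0 => fun _ => 0
  | N + 1 => fun x => max 0 (h x + maxBirkhoff T h N (T x))

theorem maxBirkhoff_nonneg {X : Type*} (T : X → X) (h : X → ℝ) (N : ℕ) (x : X) :
    0 ≤ maxBirkhoff T h N x := by
  cases N with
  | zero => exact le_rfl
  | succ N => exact le_max_left _ _

theorem maxBirkhoff_le_succ {X : Type*} (T : X → X) (h : X → ℝ) (N : ℕ) :
    ∀ x, maxBirkhoff T h N x ≤ maxBirkhoff T h (N + 1) x := by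
  induction N with
  | zero => exact fun x => maxBirkhoff_nonneg T h 1 x
  | succ N ih => exact fun x => max_le_max le_rfl (by linarith [ih (T x)])

theorem birkhoff_le_maxBirkhoff {X : Type*} (T : X → X) (h : X → ℝ) (n : ℕ) :
    ∀ x, birkhoff T h n x ≤ maxBirkhoff T h n x := by
  induction n with
  | zero => intro x; simp [birkhoff, maxBirkhoff]
  | succ n ih =>
    intro x
    rw [birkhoff_succ']
    exact le_trans (by linarith [ih (T x)]) (le_max_right _ _)

theorem measurable_maxBirkhoff {X : Type*} [MeasurableSpace X] {T : X → X} (hT : Measurable T)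
    {h : X → ℝ} (hh : Measurable h) (N : ℕ) : Measurable (maxBirkhoff T h N) := by
  induction N with
  | zero => exact measurable_const
  | succ N ih => exact measurable_const.max (hh.add (ih.comp hT))

theorem integrable_maxBirkhoff {X : Type*} [MeasurableSpace X] {ν : Measure X} {T : X → X}
    (hT : MeasurePreserving T ν ν) {h : X → ℝ} (hi : Integrable h ν) (N : ℕ) :
    Integrable (maxBirkhoff T h N) ν := by
  induction N with
  | zero => exact integrable_zero _ _ _
  | succ N ih => exact (integrable_zero X ℝ ν).sup (hi.add (hT.integrable_comp_of_integrable ih))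

/-- The inequality `h ≥ M_N - M_N ∘ T` on `{M_N > 0}` together with the invariance of the measure
gives the maximal inequality for the first `N` Birkhoff sums. -/
theorem setIntegral_maxBirkhoff_nonneg {X : Type*} [MeasurableSpace X] {ν : Measure X} {T : X → X}
    (hT : MeasurePreserving T ν ν) {h : X → ℝ} (hh : Measurable h) (hi : Integrable h ν) (N : ℕ) :
    0 ≤ ∫ x in {x | 0 < maxBirkhoff T h N x}, h x ∂ν := by
  have hM := measurable_maxBirkhoff hT.measurable hh N
  have hMi := integrable_maxBirkhoff hT hi N
  have hs : MeasurableSet {x | 0 < maxBirkhoff T h N x} := measurableSet_lt measurable_const hM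
  have hMT : Integrable (fun x => maxBirkhoff T h N (T x)) ν := hT.integrable_comp_of_integrable hMi
  have hinv : ∫ x, maxBirkhoff T h N (T x) ∂ν = ∫ x, maxBirkhoff T h N x ∂ν := by
    conv_rhs => rw [← hT.map_eq]
    rw [integral_map hT.measurable.aemeasurable hM.aestronglyMeasurable]
  rw [← integral_indicator hs]
  have hle : ∫ x, (maxBirkhoff T h N x - maxBirkhoff T h N (T x)) ∂ν
      ≤ ∫ x, Set.indicator {x | 0 < maxBirkhoff T h N x} h x ∂ν := by
    refine integral_mono (hMi.sub hMT) (hi.indicator hs) fun x => ?_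
    by_cases hx : 0 < maxBirkhoff T h N x
    · simp only [Set.indicator, Set.mem_ofPred_eq, hx, if_true]
      cases N with
      | zero => simp [maxBirkhoff] at hx
      | succ N =>
        have h1 := maxBirkhoff_le_succ T h N (T x)
        have h2 : maxBirkhoff T h (N + 1) x ≤ h x + maxBirkhoff T h N (T x) := by
          by_contra hc
          rw [not_le] at hc
          rcases lt_max_iff.1 (show _ < max _ _ from hc) with h3 | h3
          · have h4 : maxBirkhoff T h (N + 1) x = 0 := max_eq_left h3.le
            linarith
          · exact lt_irrefl _ h3
        linarith
    · simp only [Set.indicator, Set.mem_ofPred_eq, hx, if_false]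
      linarith [maxBirkhoff_nonneg T h N (T x)]
  rwa [integral_sub hMi hMT, hinv, sub_self] at hle

/-- The maximal ergodic lemma, in the case where the maximal function is positive almost
everywhere. -/
theorem integral_nonneg_of_maximal {X : Type*} [MeasurableSpace X] {ν : Measure X} {T : X → X}
    (hT : MeasurePreserving T ν ν) {h : X → ℝ} (hh : Measurable h) (hi : Integrable h ν)
    (hpos : ∀ᵐ x ∂ν, ∃ n, 0 < birkhoff T h n x) : 0 ≤ ∫ x, h x ∂ν := by
  have hlim := tendsto_setIntegral_of_monotone (μ := ν) (f := h)
    (s := fun N => {x | 0 < maxBirkhoff T h N x})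
    (fun N => measurableSet_lt measurable_const (measurable_maxBirkhoff hT.measurable hh N))
    (monotone_nat_of_le_succ fun N x (hx : 0 < _) => hx.trans_le (maxBirkhoff_le_succ T h N x))
    hi.integrableOn
  have hU : (⋃ N, {x | 0 < maxBirkhoff T h N x}) =ᵐ[ν] (Set.univ : Set X) := by
    rw [ae_eq_univ, ← mem_ae_iff]
    filter_upwards [hpos] with x ⟨n, hn⟩
    exact Set.mem_iUnion.2 ⟨n, hn.trans_le (birkhoff_le_maxBirkhoff T h n x)⟩
  rw [setIntegral_congr_set hU, setIntegral_univ] at hlim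
  exact ge_of_tendsto' hlim fun N => setIntegral_maxBirkhoff_nonneg hT hh hi N

/-! ### Divergence of Birkhoff sums from conservativity -/

/-- Almost every point of `{g > 1/(k+1)}` returns to this set infinitely often, so the nonnegative
series `∑ g (T^k x)` diverges. -/
theorem ae_tendsto_birkhoff_atTop {X : Type*} [MeasurableSpace X] {μ : Measure X} {T : X → X}
    (hT : MeasurePreserving T μ μ) (hcons : IsConservative T μ) {g : X → ℝ} (hg : Measurable g)
    (hgpos : ∀ x, 0 < g x) : ∀ᵐ x ∂μ, Tendsto (fun n => birkhoff T g n x) atTop atTop := by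
  have hc : Conservative T μ := by
    refine ⟨hT.quasiMeasurePreserving, fun s hs hs0 => ?_⟩
    obtain ⟨n, hn, hpos⟩ := hcons s hs (pos_iff_ne_zero.2 hs0)
    obtain ⟨x, hxs, hx⟩ := nonempty_of_measure_ne_zero hpos.ne'
    exact ⟨x, hxs, n, by omega, hx⟩
  have hret : ∀ k : ℕ, ∀ᵐ x ∂μ, x ∈ {x | 1 / ((k : ℝ) + 1) < g x} →
      ∃ᶠ n in atTop, T^[n] x ∈ {x | 1 / ((k : ℝ) + 1) < g x} := fun k =>
    hc.ae_mem_imp_frequently_image_mem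
      (measurableSet_lt measurable_const hg).nullMeasurableSet
  filter_upwards [ae_all_iff.2 hret] with x hx
  obtain ⟨k, hk⟩ := exists_nat_one_div_lt (hgpos x)
  have hfr := hx k hk
  refine (not_summable_iff_tendsto_nat_atTop_of_nonneg fun n => (hgpos (T^[n] x)).le).1 fun hs => ?_
  have hev : ∀ᶠ n in atTop, g (T^[n] x) < 1 / ((k : ℝ) + 1) :=
    hs.tendsto_atTop_zero.eventually_lt_const (by positivity)
  obtain ⟨n, h1, h2⟩ := (hfr.and_eventually hev).exists
  exact lt_asymm h1 h2

/-! ### Invariance of the level sets of the upper limit -/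

/-- The set where the upper limit of `S_n h / S_n g` exceeds `b`, written without quotients. -/
def ratioAbove {X : Type*} (T : X → X) (h g : X → ℝ) (b : ℝ) : Set X :=
  {x | ∃ c : ℚ, b < c ∧ ∃ᶠ n in atTop, (c : ℝ) * birkhoff T g n x < birkhoff T h n x}

theorem measurableSet_ratioAbove {X : Type*} [MeasurableSpace X] {T : X → X} (hT : Measurable T)
    {h g : X → ℝ} (hh : Measurable h) (hg : Measurable g) (b : ℝ) :
    MeasurableSet (ratioAbove T h g b) := by
  have : ratioAbove T h g b = ⋃ c : ℚ, ⋃ _ : b < c, ⋂ N : ℕ, ⋃ n : ℕ, ⋃ _ : N ≤ n,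
      {x | (c : ℝ) * birkhoff T g n x < birkhoff T h n x} := by
    ext x
    simp [ratioAbove, frequently_atTop]
  rw [this]
  refine .iUnion fun c => .iUnion fun _ => .iInter fun N => .iUnion fun n => .iUnion fun _ => ?_
  exact measurableSet_lt ((measurable_birkhoff hT hg n).const_mul _) (measurable_birkhoff hT hh n)

/-- Lowering the level `c` to `c'` strictly leaves room of order `S_n g → ∞`, which absorbs the
single term by which the Birkhoff sums at `x` and at `T x` differ. -/
theorem mem_ratioAbove_iff {X : Type*} {T : X → X} {h g : X → ℝ} (b : ℝ) {x : X}
    (hx : Tendsto (fun n => birkhoff T g n x) atTop atTop) :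
    T x ∈ ratioAbove T h g b ↔ x ∈ ratioAbove T h g b := by
  have hx1 : Tendsto (fun n => birkhoff T g (n + 1) x) atTop atTop :=
    hx.comp (tendsto_add_atTop_nat 1)
  constructor
  · rintro ⟨c, hbc, hfr⟩
    obtain ⟨c', hb', hc'⟩ := exists_rat_btwn hbc
    refine ⟨c', hb', ?_⟩
    have hev := (hx1.const_mul_atTop (sub_pos.2 hc')).eventually_gt_atTop (c * g x - h x)
    have hfr' : ∃ᶠ n in atTop, (c' : ℝ) * birkhoff T g (n + 1) x < birkhoff T h (n + 1) x := by
      refine (hfr.and_eventually hev).mono fun n ⟨h1, h2⟩ => ?_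
      rw [birkhoff_succ'] at h2
      rw [birkhoff_succ', birkhoff_succ']
      linarith
    exact (tendsto_add_atTop_nat 1).frequently hfr'
  · rintro ⟨c, hbc, hfr⟩
    obtain ⟨c', hb', hc'⟩ := exists_rat_btwn hbc
    refine ⟨c', hb', ?_⟩
    have hev := (hx1.const_mul_atTop (sub_pos.2 hc')).eventually_gt_atTop (h x - c' * g x)
    have hfr' : ∃ᶠ n in atTop, (c : ℝ) * birkhoff T g (n + 1) x < birkhoff T h (n + 1) x := by
      rw [frequently_atTop] at hfr ⊢
      intro N
      obtain ⟨n, hn, h1⟩ := hfr (N + 1)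
      obtain ⟨m, rfl⟩ : ∃ m, n = m + 1 := ⟨n - 1, by omega⟩
      exact ⟨m, by omega, h1⟩
    refine (hfr'.and_eventually hev).mono fun n ⟨h1, h2⟩ => ?_
    rw [birkhoff_succ'] at h2
    rw [birkhoff_succ', birkhoff_succ'] at h1
    linarith

theorem preimage_ratioAbove {X : Type*} [MeasurableSpace X] {μ : Measure X} {T : X → X}
    {h g : X → ℝ} (hg : ∀ᵐ x ∂μ, Tendsto (fun n => birkhoff T g n x) atTop atTop) (b : ℝ) :
    T ⁻¹' ratioAbove T h g b =ᵐ[μ] ratioAbove T h g b := by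
  filter_upwards [hg] with x hx
  exact propext (mem_ratioAbove_iff b hx)

/-! ### Almost everywhere equality of the lower and upper limits -/

/-- The maximal lemma for `h - b g` and the measure `μ` restricted to `A`, which `T` preserves because
`A` is invariant modulo null sets. -/
theorem mul_integral_le_of_subset_ratioAbove {X : Type*} [MeasurableSpace X] {μ : Measure X}
    {T : X → X} (hT : MeasurePreserving T μ μ) {h g : X → ℝ} (hh : Measurable h)
    (hhi : Integrable h μ) (hg : Measurable g) (hgi : Integrable g μ) (hgpos : ∀ x, 0 < g x)
    {b : ℝ} {A : Set X} (hA : MeasurableSet A) (hinv : T ⁻¹' A =ᵐ[μ] A)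
    (hsub : A ⊆ ratioAbove T h g b) : b * ∫ x in A, g x ∂μ ≤ ∫ x in A, h x ∂μ := by
  have hTA : MeasurePreserving T (μ.restrict A) (μ.restrict A) := by
    have := hT.restrict_preimage hA
    rwa [Measure.restrict_congr_set hinv] at this
  have key := integral_nonneg_of_maximal hTA (h := fun x => h x - b * g x)
    (hh.sub (hg.const_mul b)) (hhi.sub (hgi.const_mul b)).integrableOn ?_
  · rw [integral_sub hhi.integrableOn (hgi.const_mul b).integrableOn, integral_const_mul] at key
    linarith
  · filter_upwards [ae_restrict_mem hA] with x hx
    obtain ⟨c, hbc, hfr⟩ := hsub hx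
    obtain ⟨n, hn⟩ := hfr.exists
    refine ⟨n, ?_⟩
    rw [birkhoff_sub_mul]
    nlinarith [birkhoff_nonneg T hgpos n x]

/-- The second set in the intersection is where the lower limit of `S_n f / S_n g` is below `a`,
since it equals the set where the upper limit of `S_n (-f) / S_n g` exceeds `-a`. -/
theorem measure_oscillation_eq_zero {X : Type*} [MeasurableSpace X] {μ : Measure X}
    {T : X → X} (hT : MeasurePreserving T μ μ) (hcons : IsConservative T μ)
    {f g : X → ℝ} (hf : Measurable f) (hfi : Integrable f μ) (hg : Measurable g)
    (hgi : Integrable g μ) (hgpos : ∀ x, 0 < g x) {a b : ℝ} (hab : a < b) :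
    μ (ratioAbove T f g b ∩ ratioAbove T (fun x => -f x) g (-a)) = 0 := by
  have hdiv := ae_tendsto_birkhoff_atTop hT hcons hg hgpos
  set A := ratioAbove T f g b ∩ ratioAbove T (fun x => -f x) g (-a) with hAdef
  have hA : MeasurableSet A := (measurableSet_ratioAbove hT.measurable hf hg b).inter
    (measurableSet_ratioAbove hT.measurable hf.neg hg (-a))
  have hinv : T ⁻¹' A =ᵐ[μ] A :=
    (preimage_ratioAbove hdiv b).inter (preimage_ratioAbove hdiv (-a))
  have h1 := mul_integral_le_of_subset_ratioAbove hT hf hfi hg hgi hgpos hA hinv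
    Set.inter_subset_left
  have h2 := mul_integral_le_of_subset_ratioAbove hT hf.neg hfi.neg hg hgi hgpos hA hinv
    Set.inter_subset_right
  simp only [Pi.neg_apply, integral_neg] at h2
  have h3 : ∫ x in A, g x ∂μ ≤ 0 := by nlinarith
  by_contra hne
  refine absurd h3 (not_le.2 ?_)
  rw [setIntegral_pos_iff_support_of_nonneg_ae (ae_of_all _ fun x => (hgpos x).le)
    hgi.integrableOn]
  have : Function.support g = Set.univ := Set.eq_univ_of_forall fun x => (hgpos x).ne'
  rw [this, Set.univ_inter]
  exact pos_iff_ne_zero.2 hne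

/-- The ratio theorem for `g` positive everywhere and measurable `f`, `g`; the sign of `f` plays no
role. -/
theorem liminf_eq_limsup_of_measurable {X : Type*} [MeasurableSpace X] {μ : Measure X}
    {T : X → X} (hT : MeasurePreserving T μ μ) (hcons : IsConservative T μ)
    {f g : X → ℝ} (hf : Measurable f) (hfi : Integrable f μ) (hg : Measurable g)
    (hgi : Integrable g μ) (hgpos : ∀ x, 0 < g x) :
    ∀ᵐ x ∂μ,
      liminf (fun n => ((birkhoff T f n x / birkhoff T g n x : ℝ) : EReal)) atTop
        = limsup (fun n => ((birkhoff T f n x / birkhoff T g n x : ℝ) : EReal)) atTop := by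
  have hnull : ∀ a b : ℚ, a < b → ∀ᵐ x ∂μ,
      x ∉ ratioAbove T f g b ∩ ratioAbove T (fun x => -f x) g (-a) := fun a b hab =>
    measure_eq_zero_iff_ae_notMem.1 (measure_oscillation_eq_zero hT hcons hf hfi hg hgi hgpos
      (Rat.cast_lt.2 hab))
  simp only [← ae_all_iff] at hnull
  filter_upwards [hnull, ae_tendsto_birkhoff_atTop hT hcons hg hgpos] with x hx hdiv
  refine le_antisymm liminf_le_limsup (not_lt.1 fun hlt => ?_)
  -- Rationals `c < a < b < d` between the two limits: `ratioAbove` asks for a level strictly beyond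
  -- its threshold, so `d` serves as level for the threshold `b` and `c` for `a`.
  obtain ⟨d, hd1, hd2⟩ := EReal.lt_iff_exists_rat_btwn.1 hlt
  obtain ⟨c, hc1, hc2⟩ := EReal.lt_iff_exists_rat_btwn.1 hd1
  obtain ⟨b, hb1, hb2⟩ := EReal.lt_iff_exists_rat_btwn.1 hc2
  obtain ⟨a, ha1, ha2⟩ := EReal.lt_iff_exists_rat_btwn.1 hb1
  have hca : (c : ℝ) < a := by exact_mod_cast ha1
  have hab : (a : ℝ) < b := by exact_mod_cast ha2
  have hbd : (b : ℝ) < d := by exact_mod_cast hb2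
  have hpos := hdiv.eventually_gt_atTop 0
  refine hx a b (by exact_mod_cast hab) ⟨⟨d, hbd, ?_⟩, ⟨-c, by push_cast; linarith, ?_⟩⟩
  · refine ((frequently_lt_of_lt_limsup (by isBoundedDefault) hd2).and_eventually hpos).mono
      fun n ⟨h1, h2⟩ => ?_
    have h3 : (d : ℝ) < birkhoff T f n x / birkhoff T g n x := by exact_mod_cast h1
    exact (lt_div_iff₀ h2).1 h3
  · refine ((frequently_lt_of_liminf_lt (by isBoundedDefault) hc1).and_eventually hpos).mono
      fun n ⟨h1, h2⟩ => ?_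
    have h3 : birkhoff T f n x / birkhoff T g n x < (c : ℝ) := by exact_mod_cast h1
    have h4 := (div_lt_iff₀ h2).1 h3
    rw [birkhoff_neg]
    push_cast
    linarith

theorem ae_birkhoff_congr {X : Type*} [MeasurableSpace X] {μ : Measure X} {T : X → X}
    (hT : MeasurePreserving T μ μ) {f f' : X → ℝ} (h : f =ᵐ[μ] f') :
    ∀ᵐ x ∂μ, ∀ n, birkhoff T f n x = birkhoff T f' n x := by
  have : ∀ k : ℕ, ∀ᵐ x ∂μ, f (T^[k] x) = f' (T^[k] x) := fun k =>
    (hT.iterate k).quasiMeasurePreserving.ae h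
  filter_upwards [ae_all_iff.2 this] with x hx n
  exact Finset.sum_congr rfl fun k _ => hx k

/-- For `f, g ∈ L¹` positive a.e., `liminf Sₙf/Sₙg = limsup Sₙf/Sₙg` almost everywhere,
i.e. the limit of the ratios exists almost everywhere. -/
theorem liminf_eq_limsup {X : Type*} [MeasurableSpace X] (μ : Measure X)
    [SigmaFinite μ] (T : X → X) (hT : MeasurePreserving T μ μ) (hcons : IsConservative T μ)
    (f g : X → ℝ) (hf : Integrable f μ) (hg : Integrable g μ)
    (hfpos : ∀ᵐ x ∂μ, 0 < f x) (hgpos : ∀ᵐ x ∂μ, 0 < g x) :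
    ∀ᵐ x ∂μ,
      liminf (fun n => ((birkhoff T f n x / birkhoff T g n x : ℝ) : EReal)) atTop
        = limsup (fun n => ((birkhoff T f n x / birkhoff T g n x : ℝ) : EReal)) atTop := by
  have hfm : Measurable (hf.1.mk f) := hf.1.stronglyMeasurable_mk.measurable
  have hgm : Measurable (hg.1.mk g) := hg.1.stronglyMeasurable_mk.measurable
  -- The value `1` is only taken on a null set, so integrability is not affected even when `μ` is
  -- infinite.
  let g' : X → ℝ := fun x => if 0 < hg.1.mk g x then hg.1.mk g x else 1
  have hg'm : Measurable g' :=
    Measurable.ite (measurableSet_lt measurable_const hgm) hgm measurable_const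
  have hg'pos : ∀ x, 0 < g' x := fun x => by
    simp only [g']
    split_ifs with h
    · exact h
    · exact one_pos
  have hgg' : g =ᵐ[μ] g' := by
    filter_upwards [hg.1.ae_eq_mk, hgpos] with x h1 h2
    rw [h1] at h2
    simp only [g', if_pos h2]
    exact h1
  filter_upwards [liminf_eq_limsup_of_measurable hT hcons hfm (hf.congr hf.1.ae_eq_mk) hg'm
    (hg.congr hgg') hg'pos, ae_birkhoff_congr hT hf.1.ae_eq_mk, ae_birkhoff_congr hT hgg']
    with x hx h1 h2
  simp only [h1, h2]
  exact hx
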